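/- arXiv:2505.02302 — 2 statements merged into one kernel-verified Lean document; each statement's English description precedes it below -/
import Mathlib

section
/- Fix 1 < γ ≤ 2 and let β > 0 satisfy 1/β + 1/γ = 1. Let φ(t) = |t|^γ/γ, let X = {X(t), t ∈ [0,T]} and X_N = {X_N(t), t ∈ [0,T]} be jointly measurable stochastic processes with X(t) − X_N(t) ∈ Sub_φ(Ω) for every t, and fix p ≥ 1, δ > 0, α ∈ (0,1). Suppose c_N = ∫₀^T (τ_φ(X(t) − X_N(t)))^p dt < ∞. If c_N ≤ δ / (β ln(2/α))^{p/β} and c_N < δ / p^{p(1 − 1/γ)}, then P{ ∫₀^T |X(t) − X_N(t)|^p dt > δ } ≤ α. -/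
open MeasureTheory Filter Set ProbabilityTheory

noncomputable section

/-- The set of admissible sub-φ constants of a random variable. -/
def subPhiBounds {Ω : Type*} [MeasurableSpace Ω] (P : Measure Ω) (φ : ℝ → ℝ) (ξ : Ω → ℝ) :
    Set ℝ :=
  {a | 0 < a ∧ ∀ l : ℝ, ∫ ω, Real.exp (l * ξ ω) ∂P ≤ Real.exp (φ (a * l))}

/-- `ξ ∈ Sub_φ(Ω)`. -/
def IsSubPhi {Ω : Type*} [MeasurableSpace Ω] (P : Measure Ω) (φ : ℝ → ℝ) (ξ : Ω → ℝ) : Prop :=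
  Measurable ξ ∧ (∫ ω, ξ ω ∂P) = 0 ∧
    (∀ l : ℝ, Integrable (fun ω => Real.exp (l * ξ ω)) P) ∧
    (subPhiBounds P φ ξ).Nonempty

/-- The φ-sub-Gaussian standard `τ_φ(ξ)`. -/
def tauPhi {Ω : Type*} [MeasurableSpace Ω] (P : Measure Ω) (φ : ℝ → ℝ) (ξ : Ω → ℝ) : ℝ :=
  sInf (subPhiBounds P φ ξ)

/-- An N-Orlicz function. -/
def IsNOrlicz (φ : ℝ → ℝ) : Prop :=
  Continuous φ ∧ (∀ x, φ (-x) = φ x) ∧ ConvexOn ℝ Set.univ φ ∧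
    StrictMonoOn φ (Set.Ioi 0) ∧ φ 0 = 0 ∧ (∀ x ≠ 0, 0 < φ x) ∧
    Tendsto (fun x => φ x / x) (nhdsWithin 0 (Set.Ioi 0)) (nhds 0) ∧
    Tendsto (fun x => φ x / x) atTop atTop

/-- The Young–Fenchel transform `φ*`. -/
def youngFenchel (φ : ℝ → ℝ) (x : ℝ) : ℝ := ⨆ y : ℝ, (x * y - φ y)

/-- The function `φ(t) = t²/γ` for `|t| < 1`, `|t|^γ/γ` for `|t| ≥ 1`. -/
def phiGamma (γ : ℝ) : ℝ → ℝ := fun x => if |x| < 1 then x ^ 2 / γ else |x| ^ γ / γ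

open scoped ENNReal

lemma aux_moment_a {Ω : Type*} [MeasurableSpace Ω] (P : Measure Ω) 
    (γ β : ℝ) (hγ1 : 1 < γ) (hβ : 0 < β) (hβγ : 1 / β + 1 / γ = 1) (ξ : Ω → ℝ)
    (hi : ∀ l : ℝ, Integrable (fun ω => Real.exp (l * ξ ω)) P) (r : ℝ) (hr : 0 < r) (a : ℝ)
    (ha : a ∈ subPhiBounds P (fun x => |x| ^ γ / γ) ξ) :
    ∫⁻ ω, ENNReal.ofReal (|ξ ω| ^ r) ∂P ≤
      ENNReal.ofReal (2 * (r / Real.exp 1) ^ (r / β) * a ^ r) := by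
  obtain ⟨ha0, hl⟩ := ha
  have hγ0 : 0 < γ := by linarith
  set l : ℝ := r ^ (1 / γ) / a with hldef
  have hl0 : 0 < l := by positivity
  set K : ℝ := (r / l) ^ r * Real.exp (-r) with hK
  have hK0 : 0 ≤ K := by positivity
  have hpt : ∀ ω, |ξ ω| ^ r ≤ K * (Real.exp (l * ξ ω) + Real.exp (-l * ξ ω)) := by
    intro ω
    have e1 : |ξ ω| = (r / l) * (l * |ξ ω| / r) := by field_simp
    have e2 : l * |ξ ω| / r ≤ Real.exp (l * |ξ ω| / r - 1) := by
      have := Real.add_one_le_exp (l * |ξ ω| / r - 1); linarith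
    have e3 : (l * |ξ ω| / r) ^ r ≤ Real.exp (-r) * Real.exp (l * |ξ ω|) := by
      calc _ ≤ (Real.exp (l * |ξ ω| / r - 1)) ^ r :=
            Real.rpow_le_rpow (by positivity) e2 hr.le
        _ = _ := by
            rw [← Real.exp_mul, ← Real.exp_add]; congr 1; field_simp; ring
    have e4 : Real.exp (l * |ξ ω|) ≤ Real.exp (l * ξ ω) + Real.exp (-l * ξ ω) := by
      rcases abs_cases (ξ ω) with ⟨h, _⟩ | ⟨h, _⟩
      · rw [h]; linarith [Real.exp_pos (-l * ξ ω)]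
      · rw [h, mul_neg, ← neg_mul]; linarith [Real.exp_pos (l * ξ ω)]
    calc |ξ ω| ^ r = (r / l) ^ r * (l * |ξ ω| / r) ^ r := by
          rw [← Real.mul_rpow (by positivity) (by positivity), ← e1]
      _ ≤ (r / l) ^ r * (Real.exp (-r) * Real.exp (l * |ξ ω|)) := by gcongr
      _ = K * Real.exp (l * |ξ ω|) := by rw [hK]; ring
      _ ≤ _ := by gcongr
  have hphi : ∀ l' : ℝ, |l'| = l → |a * l'| ^ γ / γ = r / γ := by
    intro l' h
    rw [abs_mul, h, abs_of_pos ha0, hldef, mul_div_cancel₀ _ ha0.ne', ← Real.rpow_mul hr.le,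
      one_div_mul_cancel hγ0.ne', Real.rpow_one]
  have b1 := hl l
  have b2 := hl (-l)
  simp only [hphi l (abs_of_pos hl0)] at b1
  simp only [hphi (-l) (by rw [abs_neg, abs_of_pos hl0])] at b2
  have hint : Integrable (fun ω => K * (Real.exp (l * ξ ω) + Real.exp (-l * ξ ω))) P :=
    ((hi l).add (hi (-l))).const_mul K
  calc _ ≤ ∫⁻ ω, ENNReal.ofReal (K * (Real.exp (l * ξ ω) + Real.exp (-l * ξ ω))) ∂P :=
        lintegral_mono fun ω => ENNReal.ofReal_le_ofReal (hpt ω)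
    _ = ENNReal.ofReal (∫ ω, K * (Real.exp (l * ξ ω) + Real.exp (-l * ξ ω)) ∂P) := by
        rw [ofReal_integral_eq_lintegral_ofReal hint (ae_of_all _ fun ω => by positivity)]
    _ ≤ _ := by
        apply ENNReal.ofReal_le_ofReal
        rw [integral_const_mul, integral_add (hi l) (hi (-l))]
        have e5 : K * (2 * Real.exp (r / γ)) = 2 * (r / Real.exp 1) ^ (r / β) * a ^ r := by
          have g1 : 1 / γ = 1 - 1 / β := by linarith
          have g2 : r / l = r ^ (1 / β) * a := by
            rw [hldef, g1, Real.rpow_sub hr, Real.rpow_one]; field_simp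
          have g3 : r / γ = r - r / β := by
            have : r * (1 / γ) = r * (1 - 1 / β) := by rw [g1]
            rw [mul_one_div] at this; rw [this]; ring
          rw [hK, g2, Real.mul_rpow (by positivity) ha0.le, ← Real.rpow_mul hr.le,
            Real.div_rpow hr.le (Real.exp_pos 1).le, ← Real.exp_mul, g3, Real.exp_sub, Real.exp_neg]
          have : 1 / β * r = r / β := by ring
          rw [this, one_mul]; field_simp
        rw [← e5]
        gcongr
        linarith

lemma aux_tau_nonneg {Ω : Type*} [MeasurableSpace Ω] (P : Measure Ω) (φ : ℝ → ℝ) (ξ : Ω → ℝ) :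
    0 ≤ tauPhi P φ ξ := Real.sInf_nonneg fun _ h => h.1.le

lemma aux_moment {Ω : Type*} [MeasurableSpace Ω] (P : Measure Ω) 
    (γ β : ℝ) (hγ1 : 1 < γ) (hβ : 0 < β) (hβγ : 1 / β + 1 / γ = 1) (ξ : Ω → ℝ)
    (h : IsSubPhi P (fun x => |x| ^ γ / γ) ξ) (r : ℝ) (hr : 0 < r) :
    ∫⁻ ω, ENNReal.ofReal (|ξ ω| ^ r) ∂P ≤
      ENNReal.ofReal (2 * (r / Real.exp 1) ^ (r / β) *
        (tauPhi P (fun x => |x| ^ γ / γ) ξ) ^ r) := by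
  obtain ⟨u, -, hu, hmem⟩ := exists_seq_tendsto_sInf h.2.2.2 ⟨0, fun _ h => h.1.le⟩
  refine ge_of_tendsto' (x := atTop) ?_ fun n =>
    aux_moment_a P γ β hγ1 hβ hβγ ξ h.2.2.1 r hr (u n) (hmem n)
  refine ENNReal.tendsto_ofReal (Tendsto.const_mul _ ?_)
  exact hu.rpow_const (Or.inr hr.le)

lemma aux_mink {Ω : Type*} [MeasurableSpace Ω] (P : Measure Ω) [IsProbabilityMeasure P]
    (μ : Measure ℝ) [SFinite μ] (f : ℝ → Ω → ℝ≥0∞) (hf : Measurable (Function.uncurry f))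
    (w : ℝ → ℝ≥0∞) (hw : AEMeasurable w μ) (hw0 : ∀ t, w t ≠ 0) (hwt : ∀ t, w t ≠ ⊤)
    (C : ℝ≥0∞) (s : ℝ) (hs : 1 ≤ s)
    (hC : ∀ᵐ t ∂μ, ∫⁻ ω, f t ω ^ s ∂P ≤ C * w t ^ s) :
    ∫⁻ ω, (∫⁻ t, f t ω ∂μ) ^ s ∂P ≤ C * (∫⁻ t, w t ∂μ) ^ s := by
  have hs0 : 0 < s := by linarith
  set W := ∫⁻ t, w t ∂μ with hW
  have key : ∀ ω, (∫⁻ t, f t ω ∂μ) ^ s ≤ (∫⁻ t, f t ω ^ s * w t ^ (1 - s) ∂μ) * W ^ (s - 1) := by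
    intro ω
    have hfm : Measurable fun t => f t ω := hf.comp (measurable_id.prodMk measurable_const)
    have := ENNReal.lintegral_mul_norm_pow_le (μ := μ) (f := fun t => f t ω ^ s * w t ^ (1 - s))
      (g := w) ((hfm.pow_const s).aemeasurable.mul (hw.pow_const _)) hw (p := 1 / s) (q := 1 - 1 / s)
      (by positivity) (by rw [sub_nonneg, div_le_one hs0]; exact hs) (by ring)
    have e : ∀ t, (f t ω ^ s * w t ^ (1 - s)) ^ (1 / s) * w t ^ (1 - 1 / s) = f t ω := by
      intro t
      rw [ENNReal.mul_rpow_of_nonneg _ _ (by positivity), ← ENNReal.rpow_mul, ← ENNReal.rpow_mul,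
        mul_assoc, ← ENNReal.rpow_add _ _ (hw0 t) (hwt t), mul_one_div_cancel hs0.ne',
        ENNReal.rpow_one]
      have : (1 - s) * (1 / s) + (1 - 1 / s) = 0 := by field_simp; ring
      rw [this, ENNReal.rpow_zero, mul_one]
    simp only [e] at this
    calc _ ≤ _ := ENNReal.rpow_le_rpow this hs0.le
      _ = _ := by
        rw [ENNReal.mul_rpow_of_nonneg _ _ hs0.le, ← ENNReal.rpow_mul, ← ENNReal.rpow_mul,
          one_div_mul_cancel hs0.ne', ENNReal.rpow_one]
        congr 2; field_simp
  have hswap : AEMeasurable (Function.uncurry fun ω t => f t ω ^ s * w t ^ (1 - s)) (P.prod μ) := by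
    refine AEMeasurable.mul ?_ ?_
    · exact ((hf.comp measurable_swap).pow_const s).aemeasurable
    · exact (hw.pow_const (1 - s)).comp_snd
  calc _ ≤ ∫⁻ ω, (∫⁻ t, f t ω ^ s * w t ^ (1 - s) ∂μ) * W ^ (s - 1) ∂P := lintegral_mono key
    _ = (∫⁻ ω, ∫⁻ t, f t ω ^ s * w t ^ (1 - s) ∂μ ∂P) * W ^ (s - 1) :=
        lintegral_mul_const'' _ hswap.lintegral_prod_right'
    _ = (∫⁻ t, ∫⁻ ω, f t ω ^ s * w t ^ (1 - s) ∂P ∂μ) * W ^ (s - 1) := by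
        rw [lintegral_lintegral_swap hswap]
    _ ≤ (∫⁻ t, C * w t ∂μ) * W ^ (s - 1) := by
        gcongr ?_ * _
        refine lintegral_mono_ae ?_
        filter_upwards [hC] with t ht
        have hfm : Measurable fun ω => f t ω := hf.comp (measurable_const.prodMk measurable_id)
        rw [lintegral_mul_const _ (hfm.pow_const s)]
        calc _ ≤ C * w t ^ s * w t ^ (1 - s) := by gcongr
          _ = _ := by
            rw [mul_assoc, ← ENNReal.rpow_add _ _ (hw0 t) (hwt t)]; simp
    _ = C * W ^ s := by
        rw [lintegral_const_mul'' _ hw, mul_assoc]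
        congr 1
        have h1s : W ^ s = W ^ (1 + (s - 1)) := by congr 1; ring
        rw [h1s, ENNReal.rpow_add_of_nonneg _ _ (by norm_num) (by linarith), ENNReal.rpow_one]

lemma aux_tail {Ω : Type*} [MeasurableSpace Ω]
    (P : Measure Ω) [IsProbabilityMeasure P]
    (γ β : ℝ) (hγ1 : 1 < γ) (hβ : 0 < β) (hβγ : 1 / β + 1 / γ = 1)
    (T : ℝ) (hT : 0 < T) (Y : ℝ → Ω → ℝ) (hY : Measurable (Function.uncurry Y))
    (hsub : ∀ t ∈ Set.Icc (0:ℝ) T, IsSubPhi P (fun x => |x| ^ γ / γ) (Y t))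
    (p δ s : ℝ) (hp : 1 ≤ p) (hδ : 0 < δ) (hs : 1 ≤ s)
    (hint : IntegrableOn (fun t => tauPhi P (fun x => |x| ^ γ / γ) (Y t) ^ p) (Set.Ioc 0 T)) :
    P {ω | δ < ∫ t in Set.Ioc 0 T, |Y t ω| ^ p} ≤
      ENNReal.ofReal (2 * (p * s / Real.exp 1) ^ (p * s / β) *
        ((∫ t in Set.Ioc 0 T, tauPhi P (fun x => |x| ^ γ / γ) (Y t) ^ p) / δ) ^ s) := by
  have hp0 : 0 < p := by linarith
  have hs0 : 0 < s := by linarith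
  set τ : ℝ → ℝ := fun t => tauPhi P (fun x => |x| ^ γ / γ) (Y t) with hτ
  have hτ0 : ∀ t, 0 ≤ τ t := fun t => aux_tau_nonneg _ _ _
  set c : ℝ := ∫ t in Set.Ioc 0 T, τ t ^ p with hc
  have hc0 : 0 ≤ c := integral_nonneg fun t => Real.rpow_nonneg (hτ0 t) _
  set C : ℝ := 2 * (p * s / Real.exp 1) ^ (p * s / β) with hC
  have hC0 : 0 ≤ C := by positivity
  set f : ℝ → Ω → ℝ≥0∞ := fun t ω => ENNReal.ofReal (|Y t ω| ^ p) with hf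
  have hYa : Measurable fun z : ℝ × Ω => |Y z.1 z.2| ^ p := by
    have h := hY
    have : Measurable fun z : ℝ × Ω => |Function.uncurry Y z| ^ p := (hY.abs).pow_const p
    exact this
  have hfm : Measurable (Function.uncurry f) := hYa.ennreal_ofReal
  set μ : Measure ℝ := volume.restrict (Set.Ioc 0 T) with hμ
  have hUm : Measurable fun ω => ∫⁻ t, f t ω ∂μ :=
    Measurable.lintegral_prod_left' (f := Function.uncurry f) hfm
  have step : ∀ ε : ℝ, 0 < ε → P {ω | δ < ∫ t in Set.Ioc 0 T, |Y t ω| ^ p} ≤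
      ENNReal.ofReal (C * ((c + ε * T) / δ) ^ s) := by
    intro ε hε
    have hi2 : Integrable (fun t => τ t ^ p + ε) μ := hint.add (integrable_const ε)
    have hW : ∫⁻ t, ENNReal.ofReal (τ t ^ p + ε) ∂μ = ENNReal.ofReal (c + ε * T) := by
      rw [← ofReal_integral_eq_lintegral_ofReal hi2
        (ae_of_all _ fun t => add_nonneg (Real.rpow_nonneg (hτ0 t) _) hε.le)]
      congr 1
      rw [integral_add hint (integrable_const ε)]
      simp [hμ, hT.le, hc, hτ, mul_comm]
    have hpos : ∀ t, 0 < τ t ^ p + ε := fun t => add_pos_of_nonneg_of_pos (Real.rpow_nonneg (hτ0 t) _) hε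
    have hm := aux_mink P μ f hfm (fun t => ENNReal.ofReal (τ t ^ p + ε))
      hi2.aestronglyMeasurable.aemeasurable.ennreal_ofReal
      (fun t => (ENNReal.ofReal_pos.2 (hpos t)).ne') (fun t => ENNReal.ofReal_ne_top)
      (ENNReal.ofReal C) s hs (by
        filter_upwards [ae_restrict_mem measurableSet_Ioc] with t ht
        have := aux_moment P γ β hγ1 hβ hβγ (Y t) (hsub t ⟨ht.1.le, ht.2⟩) (p * s) (by positivity)
        calc _ = ∫⁻ ω, ENNReal.ofReal (|Y t ω| ^ (p * s)) ∂P := by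
              refine lintegral_congr fun ω => ?_
              rw [hf, ENNReal.ofReal_rpow_of_nonneg (by positivity) hs0.le,
                ← Real.rpow_mul (abs_nonneg _)]
          _ ≤ _ := this
          _ ≤ ENNReal.ofReal (C * (τ t ^ p + ε) ^ s) := by
              apply ENNReal.ofReal_le_ofReal
              refine mul_le_mul_of_nonneg_left ?_ hC0
              rw [Real.rpow_mul (hτ0 t)]
              exact Real.rpow_le_rpow (Real.rpow_nonneg (hτ0 t) _) (by linarith) hs0.le
          _ = _ := by
              rw [ENNReal.ofReal_mul hC0, ENNReal.ofReal_rpow_of_nonneg (hpos t).le hs0.le])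
    rw [hW] at hm
    have hd : (ENNReal.ofReal δ) ^ s ≠ 0 := by
      rw [ENNReal.ofReal_rpow_of_pos hδ]
      exact (ENNReal.ofReal_pos.2 (by positivity)).ne'
    have hd' : (ENNReal.ofReal δ) ^ s ≠ ⊤ :=
      ENNReal.rpow_ne_top_of_nonneg hs0.le ENNReal.ofReal_ne_top
    calc _ ≤ P {ω | ENNReal.ofReal δ ^ s ≤ (∫⁻ t, f t ω ∂μ) ^ s} := by
          refine measure_mono fun ω hω => ?_
          simp only [Set.mem_ofPred_eq] at hω ⊢
          refine ENNReal.rpow_le_rpow ?_ hs0.le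
          have hmt : Measurable fun t => |Y t ω| ^ p :=
            hYa.comp (measurable_id.prodMk measurable_const)
          rw [integral_eq_lintegral_of_nonneg_ae (ae_of_all _ fun t => by positivity)
            hmt.aestronglyMeasurable] at hω
          exact (ENNReal.ofReal_le_ofReal hω.le).trans ENNReal.ofReal_toReal_le
      _ ≤ (∫⁻ ω, (∫⁻ t, f t ω ∂μ) ^ s ∂P) / ENNReal.ofReal δ ^ s :=
          meas_ge_le_lintegral_div (hUm.pow_const s).aemeasurable hd hd'
      _ ≤ (ENNReal.ofReal C * ENNReal.ofReal (c + ε * T) ^ s) / ENNReal.ofReal δ ^ s := by gcongr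
      _ = _ := by
          have : 0 ≤ c + ε * T := by positivity
          rw [ENNReal.ofReal_mul hC0, Real.div_rpow this hδ.le, ENNReal.ofReal_div_of_pos (by positivity),
            ENNReal.ofReal_rpow_of_nonneg this hs0.le, ENNReal.ofReal_rpow_of_pos hδ, mul_div_assoc]
  have hlim : Tendsto (fun ε : ℝ => ENNReal.ofReal (C * ((c + ε * T) / δ) ^ s))
      (nhdsWithin 0 (Set.Ioi 0)) (nhds (ENNReal.ofReal (C * (c / δ) ^ s))) := by
    refine ENNReal.tendsto_ofReal (Tendsto.const_mul _ (Tendsto.rpow_const ?_ (Or.inr hs0.le)))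
    refine Tendsto.mono_left ?_ nhdsWithin_le_nhds
    have : Continuous fun ε : ℝ => (c + ε * T) / δ := by fun_prop
    simpa using this.tendsto 0
  exact ge_of_tendsto hlim (by filter_upwards [self_mem_nhdsWithin] with ε hε using step ε hε)

/-- Theorem 3: modelling with given reliability and accuracy in `L_p(0,T)` for
`φ(t) = |t|^γ/γ`, `1 < γ ≤ 2`. -/
theorem statement2 {Ω : Type*} [MeasurableSpace Ω]
    (P : Measure Ω) [IsProbabilityMeasure P]
    (γ β : ℝ) (hγ1 : 1 < γ) (hγ2 : γ ≤ 2) (hβ : 0 < β) (hβγ : 1 / β + 1 / γ = 1)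
    (T : ℝ) (hT : 0 < T)
    (X XN : ℝ → Ω → ℝ)
    (hX : Measurable (Function.uncurry X)) (hXN : Measurable (Function.uncurry XN))
    (hsub : ∀ t ∈ Set.Icc (0:ℝ) T,
      IsSubPhi P (fun x => |x| ^ γ / γ) (fun ω => X t ω - XN t ω))
    (p δ α : ℝ) (hp : 1 ≤ p) (hδ : 0 < δ) (hα : α ∈ Set.Ioo (0:ℝ) 1)
    (cN : ℝ)
    (hcN : cN = ∫ t in Set.Ioc 0 T,
      tauPhi P (fun x => |x| ^ γ / γ) (fun ω => X t ω - XN t ω) ^ p)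
    (hint : IntegrableOn
      (fun t => tauPhi P (fun x => |x| ^ γ / γ) (fun ω => X t ω - XN t ω) ^ p)
      (Set.Ioc 0 T))
    (h1 : cN ≤ δ / (β * Real.log (2 / α)) ^ (p / β))
    (h2 : cN < δ / p ^ (p * (1 - 1 / γ))) :
    P {ω | δ < ∫ t in Set.Ioc 0 T, |X t ω - XN t ω| ^ p} ≤ ENNReal.ofReal α := by
  have hp0 : 0 < p := by linarith
  have hY : Measurable (Function.uncurry fun t ω => X t ω - XN t ω) := hX.sub hXN
  have tail := fun s hs => aux_tail P γ β hγ1 hβ hβγ T hT (fun t ω => X t ω - XN t ω) hY hsub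
    p δ s hp hδ hs hint
  simp only [← hcN] at tail
  have hc0 : 0 ≤ cN := by
    rw [hcN]; exact integral_nonneg fun t => Real.rpow_nonneg (aux_tau_nonneg _ _ _) _
  obtain ⟨hα0, hα1⟩ := hα
  rcases hc0.eq_or_lt with h0 | hpos
  · refine (tail 1 le_rfl).trans ?_
    rw [← h0]; simp
  have hlog : 0 < Real.log (2 / α) := Real.log_pos (by rw [lt_div_iff₀ hα0]; linarith)
  set L : ℝ := δ / cN with hL
  have hL0 : 0 < L := by positivity
  set r : ℝ := L ^ (β / p) with hr
  have hr0 : 0 < r := by positivity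
  have hb : β * Real.log (2 / α) ≤ r := by
    have h3 : (β * Real.log (2 / α)) ^ (p / β) ≤ L := by
      rw [hL, le_div_iff₀ hpos, mul_comm]
      exact (le_div_iff₀ (by positivity)).1 h1
    have h4 := Real.rpow_le_rpow (by positivity) h3 (show 0 ≤ β / p by positivity)
    rwa [← Real.rpow_mul (by positivity), div_mul_div_cancel₀ hβ.ne', div_self hp0.ne',
      Real.rpow_one] at h4
  have hpr : p ≤ r := by
    have g : p * (1 - 1 / γ) = p / β := by
      have : 1 - 1 / γ = 1 / β := by linarith
      rw [this]; ring
    rw [g] at h2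
    have h3 : p ^ (p / β) ≤ L := by
      rw [hL, le_div_iff₀ hpos, mul_comm]
      exact (le_div_iff₀ (by positivity)).1 h2.le
    have h4 := Real.rpow_le_rpow (by positivity) h3 (show 0 ≤ β / p by positivity)
    rwa [← Real.rpow_mul (by positivity), div_mul_div_cancel₀ hβ.ne', div_self hp0.ne',
      Real.rpow_one] at h4
  refine (tail (r / p) (by rwa [one_le_div hp0])).trans (ENNReal.ofReal_le_ofReal ?_)
  have e1 : p * (r / p) = r := by field_simp
  have e2 : cN / δ = L⁻¹ := by rw [hL, inv_div]
  have e3 : r ^ (r / β) = L ^ (r / p) := by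
    nth_rewrite 1 [hr]
    rw [← Real.rpow_mul hL0.le]
    congr 1; field_simp
  rw [e1, e2, Real.div_rpow hr0.le (Real.exp_pos 1).le, e3, Real.inv_rpow hL0.le, ← Real.exp_mul,
    one_mul]
  have e4 : Real.log (2 / α) ≤ r / β := by rw [le_div_iff₀ hβ]; linarith
  have e5 : 2 / α ≤ Real.exp (r / β) := by
    rw [← Real.log_le_iff_le_exp (by positivity)]; exact e4
  have hLp : 0 < L ^ (r / p) := by positivity
  have e6 : 2 * (L ^ (r / p) / Real.exp (r / β)) * (L ^ (r / p))⁻¹ = 2 / Real.exp (r / β) := by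
    field_simp
  rw [e6, div_le_iff₀ (Real.exp_pos _)]
  rw [div_le_iff₀ hα0] at e5
  linarith
end
end

section
/- Fix γ > 2 and let β > 0 satisfy 1/β + 1/γ = 1. Let φ(t) = t²/γ for |t| < 1 and φ(t) = |t|^γ/γ for |t| ≥ 1. Let X = {X(t), t ∈ [0,T]} and X_N = {X_N(t), t ∈ [0,T]} be jointly measurable stochastic processes with X(t) − X_N(t) ∈ Sub_φ(Ω) for every t, and fix p ≥ 1, δ > 0, α ∈ (0,1). Suppose c_N = ∫₀^T (τ_φ(X(t) − X_N(t)))^p dt < ∞. If c_N ≤ δ / (β ln(2/α))^{p/β} and c_N < δ / p^{p(1 − 1/γ)}, then P{ ∫₀^T |X(t) − X_N(t)|^p dt > δ } ≤ α. -/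
open MeasureTheory Filter Set ProbabilityTheory

noncomputable section

lemma aux_pointwise (p s K : ℝ) (hp : 1 ≤ p) (hs : p ≤ s) (hK : 0 ≤ K) :
    1 + (s / p) * (K ^ p - 1) ≤ Real.exp (s * (K - 1)) := by
  have hp0 : 0 < p := by linarith
  have hKp : 0 ≤ K ^ p := Real.rpow_nonneg hK p
  have h1 := one_add_mul_self_le_rpow_one_add (s := K ^ p - 1) (by linarith) (p := s / p)
    ((one_le_div hp0).2 hs)
  have h2 : (1 + (K ^ p - 1)) ^ (s / p) = K ^ s := by
    rw [add_sub_cancel, ← Real.rpow_mul hK]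
    congr 1
    field_simp
  rw [h2] at h1
  refine h1.trans ?_
  have h3 : K ≤ Real.exp (K - 1) := by
    have := Real.add_one_le_exp (K - 1)
    linarith
  calc K ^ s ≤ (Real.exp (K - 1)) ^ s := Real.rpow_le_rpow hK h3 (by linarith)
    _ = Real.exp (s * (K - 1)) := by rw [← Real.exp_mul, mul_comm]

lemma aux_ofReal_integral_le {A : Type*} [MeasurableSpace A] (μ : Measure A) (h : A → ℝ)
    (hh : Integrable h μ) : ENNReal.ofReal (∫ t, h t ∂μ) ≤ ∫⁻ t, ENNReal.ofReal (h t) ∂μ := by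
  have h1 : ∫ t, h t ∂μ ≤ ∫ t, max (h t) 0 ∂μ :=
    integral_mono hh hh.pos_part (fun t => le_max_left _ _)
  refine (ENNReal.ofReal_le_ofReal h1).trans ?_
  rw [ofReal_integral_eq_lintegral_ofReal hh.pos_part (ae_of_all _ fun t => le_max_right _ _)]
  refine lintegral_mono fun t => ?_
  rcases le_total (h t) 0 with h0 | h0
  · simp [h0]
  · simp [h0]

lemma aux_phi_mono (γ : ℝ) (hγ : 2 < γ) (x y : ℝ) (h : |x| ≤ |y|) :
    phiGamma γ x ≤ phiGamma γ y := by
  unfold phiGamma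
  have hx := abs_nonneg x
  split_ifs with h1 h2 h2
  · have := sq_le_sq.2 h
    gcongr
  · have a : x ^ 2 ≤ 1 := by rw [← sq_abs]; nlinarith
    have b : (1:ℝ) ≤ |y| ^ γ := Real.one_le_rpow (not_lt.1 h2) (by linarith)
    have : x ^ 2 ≤ |y| ^ γ := a.trans b
    gcongr
  · exact absurd (h.trans_lt h2) h1
  · gcongr

lemma aux_mgf {Ω : Type*} [MeasurableSpace Ω] (P : Measure Ω)
    (γ u s a : ℝ) (hu : 1 ≤ u) (ξ : Ω → ℝ)
    (hi : ∀ l : ℝ, Integrable (fun ω => Real.exp (l * ξ ω)) P)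
    (ha : a ∈ subPhiBounds P (phiGamma γ) ξ) :
    ∫⁻ ω, ENNReal.ofReal (Real.exp (u * |ξ ω| / a - s)) ∂P ≤
      ENNReal.ofReal (2 * Real.exp (u ^ γ / γ - s)) := by
  obtain ⟨ha0, hb⟩ := ha
  have e1 : a * (u / a) = u := by field_simp
  have e2 : a * (-(u / a)) = -u := by field_simp
  have b1 := hb (u / a)
  have b2 := hb (-(u / a))
  have p1 : phiGamma γ u = u ^ γ / γ := by
    unfold phiGamma
    rw [abs_of_nonneg (by linarith), if_neg (by linarith)]
  have p2 : phiGamma γ (-u) = u ^ γ / γ := by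
    unfold phiGamma
    rw [abs_neg, abs_of_nonneg (by linarith), if_neg (by linarith)]
  rw [e1, p1] at b1
  rw [e2, p2] at b2
  have I1 := hi (u / a)
  have I2 := hi (-(u / a))
  have I : Integrable (fun ω => Real.exp (-s) *
      (Real.exp (u / a * ξ ω) + Real.exp (-(u / a) * ξ ω))) P := (I1.add I2).const_mul _
  calc _ ≤ ∫⁻ ω, ENNReal.ofReal (Real.exp (-s) *
      (Real.exp (u / a * ξ ω) + Real.exp (-(u / a) * ξ ω))) ∂P := by
        refine lintegral_mono fun ω => ENNReal.ofReal_le_ofReal ?_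
        rw [sub_eq_add_neg, Real.exp_add, mul_comm]
        gcongr
        rcases abs_cases (ξ ω) with ⟨h, _⟩ | ⟨h, _⟩
        · rw [h, mul_div_right_comm]
          linarith [Real.exp_pos (-(u / a) * ξ ω)]
        · rw [h, show u * -ξ ω / a = -(u / a) * ξ ω by ring]
          linarith [Real.exp_pos (u / a * ξ ω)]
    _ = ENNReal.ofReal (∫ ω, Real.exp (-s) *
      (Real.exp (u / a * ξ ω) + Real.exp (-(u / a) * ξ ω)) ∂P) :=
        (ofReal_integral_eq_lintegral_ofReal I (ae_of_all _ fun ω => by positivity)).symm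
    _ ≤ _ := by
        apply ENNReal.ofReal_le_ofReal
        rw [integral_const_mul, integral_add I1 I2, sub_eq_add_neg, Real.exp_add]
        nlinarith [Real.exp_pos (-s)]

lemma aux_tail_s3 {Ω : Type*} [MeasurableSpace Ω] (P : Measure Ω) [IsProbabilityMeasure P]
    (μ : Measure ℝ) [SFinite μ] (γ p s u x c δ : ℝ) (hp : 1 ≤ p) (hs : p ≤ s) (hu : 1 ≤ u)
    (hx : 0 < x) (hus : u * x = s) (hδ : 0 < δ) (hc : c * x ^ p = δ)
    (Y : ℝ → Ω → ℝ) (hY : Measurable (Function.uncurry Y))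
    (W : ℝ → ℝ) (hW : Measurable W) (hW0 : ∀ t, 0 < W t) (hWi : Integrable W μ)
    (hWc : ∫ t, W t ∂μ = c)
    (hb : ∀ᵐ t ∂μ, (∀ l : ℝ, Integrable (fun ω => Real.exp (l * Y t ω)) P) ∧
      W t ^ (1 / p) ∈ subPhiBounds P (phiGamma γ) (Y t)) :
    P {ω | δ < ∫ t, |Y t ω| ^ p ∂μ} ≤ ENNReal.ofReal (2 * Real.exp (u ^ γ / γ - s)) := by
  have hp0 : 0 < p := by linarith
  have hxp : 0 < x ^ p := Real.rpow_pos_of_pos hx p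
  have hc0 : 0 < c := by
    by_contra h
    nlinarith
  let H : ℝ → Ω → ℝ := fun t ω => W t / c * Real.exp (u * |Y t ω| / W t ^ (1 / p) - s)
  have hHm : Measurable (Function.uncurry H) := by
    have h1 : Measurable (fun z : ℝ × Ω => Y z.1 z.2) := hY
    have h2 : Measurable (fun z : ℝ × Ω => W z.1) := hW.comp measurable_fst
    have : Function.uncurry H = fun z : ℝ × Ω =>
      W z.1 / c * Real.exp (u * |Y z.1 z.2| / W z.1 ^ (1 / p) - s) := by
      ext z; rfl
    rw [this]
    refine (h2.div_const c).mul (Real.measurable_exp.comp ?_)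
    refine Measurable.sub_const (Measurable.div (Measurable.const_mul ?_ u) (h2.pow_const _)) s
    exact h1.abs
  have hGm : Measurable (fun z : Ω × ℝ => ENNReal.ofReal (H z.2 z.1)) :=
    (hHm.comp measurable_swap).ennreal_ofReal
  have hG : Measurable (fun ω => ∫⁻ t, ENNReal.ofReal (H t ω) ∂μ) := hGm.lintegral_prod_right'
  have hE : ∫⁻ ω, ∫⁻ t, ENNReal.ofReal (H t ω) ∂μ ∂P ≤
      ENNReal.ofReal (2 * Real.exp (u ^ γ / γ - s)) := by
    rw [lintegral_lintegral_swap (f := fun ω t => ENNReal.ofReal (H t ω)) hGm.aemeasurable]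
    calc _ ≤ ∫⁻ t, ENNReal.ofReal (W t / c) *
          ENNReal.ofReal (2 * Real.exp (u ^ γ / γ - s)) ∂μ := by
          refine lintegral_mono_ae ?_
          filter_upwards [hb] with t ht
          have hwc : 0 ≤ W t / c := (div_pos (hW0 t) hc0).le
          simp only [H, ENNReal.ofReal_mul hwc]
          rw [lintegral_const_mul' _ _ ENNReal.ofReal_ne_top]
          gcongr
          exact aux_mgf P γ u s _ hu (Y t) ht.1 ht.2
      _ = _ := by
          rw [lintegral_mul_const' _ _ ENNReal.ofReal_ne_top,
            ← ofReal_integral_eq_lintegral_ofReal (hWi.div_const c)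
              (ae_of_all _ fun t => (div_pos (hW0 t) hc0).le),
            integral_div, hWc, div_self hc0.ne']
          simp
  have hsub : {ω | δ < ∫ t, |Y t ω| ^ p ∂μ} ⊆ {ω | 1 ≤ ∫⁻ t, ENNReal.ofReal (H t ω) ∂μ} := by
    intro ω hω
    simp only [mem_setOf_eq] at hω ⊢
    have hYi : Integrable (fun t => |Y t ω| ^ p) μ := by
      by_contra h
      rw [integral_undef h] at hω
      linarith
    have hi1 : Integrable (fun t => (1 - s / p) / c * W t) μ := hWi.const_mul _
    have hi2 : Integrable (fun t => s / p / δ * |Y t ω| ^ p) μ := hYi.const_mul _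
    have key : ∀ t, (1 - s / p) / c * W t + s / p / δ * |Y t ω| ^ p ≤ H t ω := by
      intro t
      have hw := hW0 t
      have ha0 : 0 < W t ^ (1 / p) := Real.rpow_pos_of_pos hw _
      have hap : (W t ^ (1 / p)) ^ p = W t := by
        rw [← Real.rpow_mul hw.le, one_div_mul_cancel hp0.ne', Real.rpow_one]
      have h := aux_pointwise p s (|Y t ω| / (W t ^ (1 / p) * x)) hp hs (by positivity)
      rw [Real.div_rpow (abs_nonneg _) (by positivity), Real.mul_rpow ha0.le hx.le, hap] at h
      have e1 : s * (|Y t ω| / (W t ^ (1 / p) * x) - 1) = u * |Y t ω| / W t ^ (1 / p) - s := by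
        rw [← hus]
        field_simp
      rw [e1] at h
      calc _ = W t / c * (1 + s / p * (|Y t ω| ^ p / (W t * x ^ p) - 1)) := by
            rw [← hc]
            field_simp
            ring
        _ ≤ _ := by
            simp only [H]
            gcongr
    have hge : 1 ≤ ∫ t, ((1 - s / p) / c * W t + s / p / δ * |Y t ω| ^ p) ∂μ := by
      rw [integral_add hi1 hi2, integral_const_mul, integral_const_mul, hWc,
        div_mul_cancel₀ _ hc0.ne']
      have : s / p * 1 ≤ s / p * ((∫ t, |Y t ω| ^ p ∂μ) / δ) := by
        have : 1 ≤ (∫ t, |Y t ω| ^ p ∂μ) / δ := (one_le_div hδ).2 hω.le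
        have : 0 ≤ s / p := by apply div_nonneg <;> linarith
        gcongr
      have e : s / p / δ * (∫ t, |Y t ω| ^ p ∂μ) = s / p * ((∫ t, |Y t ω| ^ p ∂μ) / δ) := by ring
      rw [e]
      linarith
    calc (1 : ENNReal) = ENNReal.ofReal 1 := by simp
      _ ≤ _ := ENNReal.ofReal_le_ofReal hge
      _ ≤ _ := aux_ofReal_integral_le μ _ (hi1.add hi2)
      _ ≤ _ := lintegral_mono fun t => ENNReal.ofReal_le_ofReal (key t)
  refine (measure_mono hsub).trans (le_trans ?_ hE)
  simpa using mul_meas_ge_le_lintegral (μ := P) hG 1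

lemma aux_strict {Ω : Type*} [MeasurableSpace Ω]
    (P : Measure Ω) [IsProbabilityMeasure P]
    (γ β : ℝ) (hγ : 2 < γ) (hβ : 0 < β) (hβγ : 1 / β + 1 / γ = 1)
    (T : ℝ) (hT : 0 < T) (Y : ℝ → Ω → ℝ)
    (hY : Measurable (Function.uncurry Y))
    (hsub : ∀ t ∈ Set.Icc (0:ℝ) T, IsSubPhi P (phiGamma γ) (Y t))
    (p δ α : ℝ) (hp : 1 ≤ p) (hδ : 0 < δ) (hα : α ∈ Set.Ioo (0:ℝ) 1)
    (cN : ℝ)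
    (hcN : cN = ∫ t in Set.Ioc 0 T, tauPhi P (phiGamma γ) (Y t) ^ p)
    (hint : IntegrableOn (fun t => tauPhi P (phiGamma γ) (Y t) ^ p) (Set.Ioc 0 T))
    (h1 : cN < δ / (β * Real.log (2 / α)) ^ (p / β))
    (h2 : cN < δ / p ^ (p * (1 - 1 / γ))) :
    P {ω | δ < ∫ t in Set.Ioc 0 T, |Y t ω| ^ p} ≤ ENNReal.ofReal α := by
  have hp0 : 0 < p := by linarith
  have hγ0 : 0 < γ := by linarith
  have hα0 : 0 < α := hα.1
  have hτ0 : ∀ t, 0 ≤ tauPhi P (phiGamma γ) (Y t) := fun t =>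
    Real.sInf_nonneg fun a ha => ha.1.le
  have hcN0 : 0 ≤ cN := by
    rw [hcN]
    exact integral_nonneg fun t => Real.rpow_nonneg (hτ0 t) p
  obtain ⟨c, hcc, hc'⟩ := exists_between (lt_min h1 h2)
  obtain ⟨hc1, hc2⟩ := lt_min_iff.1 hc'
  have hc0 : 0 < c := by linarith
  let ε := (c - cN) / T
  have hε : 0 < ε := div_pos (by linarith) hT
  let g := hint.1.mk
  have hgm : Measurable g := hint.1.stronglyMeasurable_mk.measurable
  have hgeq := hint.1.ae_eq_mk
  let W : ℝ → ℝ := fun t => |g t| + ε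
  have hWeq : ∀ᵐ t ∂(volume.restrict (Set.Ioc 0 T)),
      W t = tauPhi P (phiGamma γ) (Y t) ^ p + ε := by
    filter_upwards [hgeq] with t ht
    simp only [W, g]
    rw [← ht, abs_of_nonneg (Real.rpow_nonneg (hτ0 t) p)]
  have hWm : Measurable W := hgm.abs.add_const ε
  have hcst : Integrable (fun _ : ℝ => ε) (volume.restrict (Set.Ioc 0 T)) := integrable_const ε
  have hWi : Integrable W (volume.restrict (Set.Ioc 0 T)) :=
    (hint.add hcst).congr (hWeq.mono fun t ht => ht.symm)
  have hWc : ∫ t in Set.Ioc 0 T, W t = c := by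
    rw [integral_congr_ae hWeq, integral_add hint hcst, ← hcN]
    simp only [integral_const, measureReal_restrict_apply_univ, Real.volume_real_Ioc, smul_eq_mul]
    rw [sub_zero, max_eq_left hT.le]
    simp only [ε]
    field_simp
    ring
  have hb : ∀ᵐ t ∂(volume.restrict (Set.Ioc 0 T)),
      (∀ l : ℝ, Integrable (fun ω => Real.exp (l * Y t ω)) P) ∧
      W t ^ (1 / p) ∈ subPhiBounds P (phiGamma γ) (Y t) := by
    filter_upwards [hWeq, ae_restrict_mem measurableSet_Ioc] with t ht htm
    obtain ⟨_, _, hi, hne⟩ := hsub t (Ioc_subset_Icc_self htm)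
    refine ⟨hi, ?_⟩
    have hlt : tauPhi P (phiGamma γ) (Y t) < W t ^ (1 / p) := by
      rw [ht]
      calc _ = (tauPhi P (phiGamma γ) (Y t) ^ p) ^ (1 / p) := by
            rw [← Real.rpow_mul (hτ0 t), mul_one_div_cancel hp0.ne', Real.rpow_one]
        _ < _ := Real.rpow_lt_rpow (Real.rpow_nonneg (hτ0 t) p) (by linarith) (by positivity)
    obtain ⟨a, ⟨ha0, ha⟩, haW⟩ := exists_lt_of_csInf_lt hne hlt
    refine ⟨ha0.trans haW, fun l => (ha l).trans ?_⟩
    apply Real.exp_le_exp.2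
    apply aux_phi_mono γ hγ
    rw [abs_mul, abs_mul, abs_of_pos ha0, abs_of_pos (ha0.trans haW)]
    gcongr
  -- exponents
  let x := (δ / c) ^ (1 / p)
  have hx0 : 0 < x := Real.rpow_pos_of_pos (div_pos hδ hc0) _
  have hxp : x ^ p = δ / c := by
    simp only [x]
    rw [← Real.rpow_mul (div_pos hδ hc0).le, one_div_mul_cancel hp0.ne', Real.rpow_one]
  have hβinv : 1 - 1 / γ = 1 / β := by linarith
  have hxb : ∀ y : ℝ, 0 < y → c < δ / y ^ (p / β) → y ≤ x ^ β := by
    intro y hy h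
    have hyp : 0 < y ^ (p / β) := Real.rpow_pos_of_pos hy _
    have h' : y ^ (p / β) ≤ x ^ p := by
      rw [hxp]
      rw [lt_div_iff₀ hyp] at h
      rw [le_div_iff₀ hc0]
      linarith
    have h3 := Real.rpow_le_rpow hyp.le h' (show 0 ≤ β / p by positivity)
    rw [← Real.rpow_mul hy.le, ← Real.rpow_mul hx0.le] at h3
    rw [show p / β * (β / p) = 1 by field_simp, show p * (β / p) = β by field_simp,
      Real.rpow_one] at h3
    exact h3
  have hs : p ≤ x ^ β := by
    apply hxb p hp0
    rw [hβinv, mul_one_div] at hc2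
    exact hc2
  have hlog : 0 < Real.log (2 / α) := by
    apply Real.log_pos
    rw [one_lt_div hα0]
    linarith [hα.2]
  have hL : β * Real.log (2 / α) ≤ x ^ β := hxb _ (by positivity) hc1
  have hx1 : 1 ≤ x := by
    by_contra h
    have := Real.rpow_lt_one hx0.le (not_le.1 h) hβ
    linarith
  have hβ1 : 1 ≤ β := by
    by_contra h
    have : 1 < 1 / β := (one_lt_div hβ).2 (not_le.1 h)
    have : 0 < 1 / γ := by positivity
    linarith
  have hu : 1 ≤ x ^ (β - 1) := Real.one_le_rpow hx1 (by linarith)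
  have hus : x ^ (β - 1) * x = x ^ β := by
    rw [Real.rpow_sub_one hx0.ne', div_mul_cancel₀ _ hx0.ne']
  have hγβ : (β - 1) * γ = β := by
    field_simp at hβγ
    linarith
  have huγ : (x ^ (β - 1)) ^ γ = x ^ β := by
    rw [← Real.rpow_mul hx0.le, hγβ]
  have := aux_tail_s3 P (volume.restrict (Set.Ioc 0 T)) γ p (x ^ β) (x ^ (β - 1)) x c δ hp hs hu hx0
    hus hδ (by rw [hxp]; field_simp) Y hY W hWm (fun t => by positivity) hWi hWc hb
  refine this.trans (ENNReal.ofReal_le_ofReal ?_)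
  rw [huγ]
  have e : x ^ β / γ - x ^ β = - (x ^ β / β) := by
    have : x ^ β / γ - x ^ β = - (x ^ β * (1 - 1 / γ)) := by ring
    rw [this, hβinv]
    ring
  rw [e]
  have h5 : Real.log (2 / α) ≤ x ^ β / β := by
    rw [le_div_iff₀ hβ]
    linarith
  calc 2 * Real.exp (-(x ^ β / β)) ≤ 2 * Real.exp (- Real.log (2 / α)) := by gcongr
    _ = α := by
      rw [Real.exp_neg, Real.exp_log (by positivity)]
      field_simp

/-- Theorem 4: modelling with given reliability and accuracy in `L_p(0,T)` for
`φ(t) = t²/γ` if `|t| < 1`, `|t|^γ/γ` if `|t| ≥ 1`, with `γ > 2`. -/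
theorem statement3 {Ω : Type*} [MeasurableSpace Ω]
    (P : Measure Ω) [IsProbabilityMeasure P]
    (γ β : ℝ) (hγ : 2 < γ) (hβ : 0 < β) (hβγ : 1 / β + 1 / γ = 1)
    (T : ℝ) (hT : 0 < T)
    (X XN : ℝ → Ω → ℝ)
    (hX : Measurable (Function.uncurry X)) (hXN : Measurable (Function.uncurry XN))
    (hsub : ∀ t ∈ Set.Icc (0:ℝ) T, IsSubPhi P (phiGamma γ) (fun ω => X t ω - XN t ω))
    (p δ α : ℝ) (hp : 1 ≤ p) (hδ : 0 < δ) (hα : α ∈ Set.Ioo (0:ℝ) 1)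
    (cN : ℝ)
    (hcN : cN = ∫ t in Set.Ioc 0 T,
      tauPhi P (phiGamma γ) (fun ω => X t ω - XN t ω) ^ p)
    (hint : IntegrableOn
      (fun t => tauPhi P (phiGamma γ) (fun ω => X t ω - XN t ω) ^ p) (Set.Ioc 0 T))
    (h1 : cN ≤ δ / (β * Real.log (2 / α)) ^ (p / β))
    (h2 : cN < δ / p ^ (p * (1 - 1 / γ))) :
    P {ω | δ < ∫ t in Set.Ioc 0 T, |X t ω - XN t ω| ^ p} ≤ ENNReal.ofReal α := by
  obtain ⟨hα0, hα1⟩ := hα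
  have hp0 : 0 < p := by linarith
  have key : ∀ a, α < a → a < 1 →
      P {ω | δ < ∫ t in Set.Ioc 0 T, |X t ω - XN t ω| ^ p} ≤ ENNReal.ofReal a := by
    intro a ha ha1
    have ha0 : 0 < a := hα0.trans ha
    have hlog : 0 < Real.log (2 / a) := by
      apply Real.log_pos
      rw [one_lt_div ha0]
      linarith
    have hll : Real.log (2 / a) < Real.log (2 / α) := by
      apply Real.log_lt_log (by positivity)
      gcongr
    have hlt : (β * Real.log (2 / a)) ^ (p / β) < (β * Real.log (2 / α)) ^ (p / β) := by
      apply Real.rpow_lt_rpow (by positivity) _ (by positivity)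
      gcongr
    refine aux_strict P γ β hγ hβ hβγ T hT (fun t ω => X t ω - XN t ω) (hX.sub hXN) hsub
      p δ a hp hδ ⟨ha0, ha1⟩ cN hcN hint (h1.trans_lt ?_) h2
    have : 0 < (β * Real.log (2 / a)) ^ (p / β) := by positivity
    gcongr
  have hfin : P {ω | δ < ∫ t in Set.Ioc 0 T, |X t ω - XN t ω| ^ p} ≠ ⊤ := measure_ne_top _ _
  rw [ENNReal.le_ofReal_iff_toReal_le hfin hα0.le]
  refine le_of_forall_gt_imp_ge_of_dense fun b hb => ?_
  have hm : α < min b ((α + 1) / 2) := lt_min hb (by linarith)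
  have := key _ hm ((min_le_right _ _).trans_lt (by linarith))
  rw [ENNReal.le_ofReal_iff_toReal_le hfin (hα0.trans hm).le] at this
  exact this.trans (min_le_left _ _)
end
end
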